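/- Under Condition (★), for every integer h ≥ 2 and every ε > 0, the quantity #{m ∈ 𝒩_h(x) : ω(m) < (1−ε)·log log N(m) or ω(m) > (1+ε)·log log N(m)} divided by #𝒩_h(x) tends to 0 as x → ∞; i.e., ω has normal order log log N(m) over the h-full elements. -/

import Mathlib

open Filter Topology Asymptotics
open scoped Classical

noncomputable section

/-- The norm on the free abelian monoid `P →₀ ℕ`, extended multiplicatively
from the norm `N` on the prime elements. -/
def Nm {P : Type*} (N : P → ℕ) (m : P →₀ ℕ) : ℕ :=
  m.prod fun p k => N p ^ k

/-- The number of distinct prime elements generating `m`. -/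
def omegaM {P : Type*} (m : P →₀ ℕ) : ℕ := m.support.card

/-- `m` is `h`-free: every multiplicity is at most `h - 1`. -/
def HFree {P : Type*} (h : ℕ) (m : P →₀ ℕ) : Prop := ∀ p, m p ≤ h - 1

/-- `m` is `h`-full: every nonzero multiplicity is at least `h`. -/
def HFull {P : Type*} (h : ℕ) (m : P →₀ ℕ) : Prop := ∀ p, m p = 0 ∨ h ≤ m p

/-- Condition (★): `#{m : N(m) ≤ x} = κ·x + O(x^θ)` with `κ > 0`, `0 ≤ θ < 1`. -/
def StarCond {P : Type*} (N : P → ℕ) (κ θ : ℝ) : Prop :=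
  0 < κ ∧ 0 ≤ θ ∧ θ < 1 ∧
    (fun x : ℝ => (({m : P →₀ ℕ | (Nm N m : ℝ) ≤ x}.ncard : ℝ) - κ * x))
      =O[atTop] fun x : ℝ => x ^ θ

/-- The generalized zeta function `ζ_M(s) = ∑_m N(m)^{-s}`. -/
def zetaM {P : Type*} (N : P → ℕ) (s : ℝ) : ℝ :=
  ∑' m : P →₀ ℕ, 1 / (Nm N m : ℝ) ^ s

/-- The constant `γ_h`. -/
def gammah {P : Type*} (N : P → ℕ) (h : ℕ) : ℝ :=
  ∏' p : P, (1 + ((N p : ℝ) - (N p : ℝ) ^ (1 / (h : ℝ))) /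
    ((N p : ℝ) ^ 2 * ((N p : ℝ) ^ (1 / (h : ℝ)) - 1)))

/-- `A` is the Mertens constant `𝔄` of the prime system:
`𝔄 = lim (∑_{N(p) ≤ x} 1/N(p) − log log x)`. -/
def IsMertens {P : Type*} (N : P → ℕ) (A : ℝ) : Prop :=
  Tendsto (fun x : ℝ =>
      (∑ᶠ p ∈ {p : P | (N p : ℝ) ≤ x}, 1 / (N p : ℝ)) - Real.log (Real.log x))
    atTop (𝓝 A)

/-- The constant `𝔅 = -π²/6`. -/
def Bconst : ℝ := -(Real.pi ^ 2) / 6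

/-- The constant `ℭ₁`, given the Mertens constant `A`. -/
def C1const {P : Type*} (N : P → ℕ) (h : ℕ) (A : ℝ) : ℝ :=
  A - ∑' p : P, ((N p : ℝ) - 1) / ((N p : ℝ) * ((N p : ℝ) ^ h - 1))

/-- The constant `ℭ₂`, given the Mertens constant `A`. -/
def C2const {P : Type*} (N : P → ℕ) (h : ℕ) (A : ℝ) : ℝ :=
  C1const N h A ^ 2 + C1const N h A + Bconst -
    ∑' p : P, (((N p : ℝ) ^ (h - 1) - 1) / ((N p : ℝ) ^ h - 1)) ^ 2

/-- The convergent series `𝔏_h(r)`. -/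
def LhSum {P : Type*} (N : P → ℕ) (h : ℕ) (r : ℝ) : ℝ :=
  ∑' p : P, 1 / ((N p : ℝ) ^ (r / (h : ℝ) - 1) *
    ((N p : ℝ) - (N p : ℝ) ^ (1 - 1 / (h : ℝ)) + 1))

/-- The constant `𝔇₁`, given the Mertens constant `A`. -/
def D1const {P : Type*} (N : P → ℕ) (h : ℕ) (A : ℝ) : ℝ :=
  A - Real.log (h : ℝ) + LhSum N h ((h : ℝ) + 1) - LhSum N h (2 * (h : ℝ))

/-- The constant `𝔇₂`, given the Mertens constant `A`. -/
def D2const {P : Type*} (N : P → ℕ) (h : ℕ) (A : ℝ) : ℝ :=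
  D1const N h A ^ 2 + D1const N h A + Bconst -
    ∑' p : P, (1 / ((N p : ℝ) - (N p : ℝ) ^ (1 - 1 / (h : ℝ)) + 1)) ^ 2

/-- The error term `R_{S_h}(x)` for `h`-free counts. -/
def RSfree (h : ℕ) (θ : ℝ) (x : ℝ) : ℝ :=
  if 1 / (h : ℝ) < θ then x ^ θ
  else if 1 / (h : ℝ) = θ then x ^ (1 / (h : ℝ)) * Real.log x
  else x ^ (1 / (h : ℝ))

/-- The error term `R_{N_h}(x)` for `h`-full counts. -/
def RNfull (h : ℕ) (θ : ℝ) (x : ℝ) : ℝ :=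
  if (h : ℝ) / ((h : ℝ) + 1) < θ then x ^ (θ / (h : ℝ))
  else if ∃ i : ℕ, 1 ≤ i ∧ i ≤ h - 1 ∧ θ = (h : ℝ) / ((h : ℝ) + (i : ℝ)) then
    x ^ (1 / ((h : ℝ) + 1)) * Real.log x
  else x ^ (1 / ((h : ℝ) + 1))

/-!
Every `h`-full element is `h • a + β`, where `a` is arbitrary and `β` lies in a family with
`∑ N(β)^(-1/h) < ∞`. For fixed `β` the number of `m = h • a + β` of norm at most `x` is
`O((x / N(β))^(1/h))`, and only `o(x^(1/h))` of them are exceptional: `ω(m) = ω(a) + O(1)`, while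
`log log N(m) = log log x + O(1)` and `ω(a) ~ log log x` for all but `o(x^(1/h))` of the `a`.
Dominated convergence over `β` concludes, since the number of `h`-full elements is `≫ x^(1/h)`.

The normal order of `ω(a)` over all `a` comes from Turán's variance bound, applied to the primes of
norm at most `x^((1-θ)/2)` so that the error terms `O(x^θ)` stay under control. It needs
`∑ 1/N(p) ~ log log x` over `N(p) ≤ x`, which follows from `ζ(s) ~ κ/(s-1)` as `s → 1⁺`.
-/

lemma log_log_rpow {y r : ℝ} (hy : 1 < y) (hr : 0 < r) :
    Real.log (Real.log (y ^ r)) = Real.log (Real.log y) + Real.log r := by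
  rw [Real.log_rpow (zero_lt_one.trans hy), Real.log_mul hr.ne' (Real.log_pos hy).ne', add_comm]

lemma abs_log_log_sub_le {h : ℕ} {y n : ℝ} (hy : 1 < y) (hlower : y ^ (1 / 2 : ℝ) ≤ n)
    (hupper : n ≤ y ^ h) :
    |Real.log (Real.log n) - Real.log (Real.log y)| ≤ Real.log 2 + Real.log h := by
  have hh : h ≠ 0 := by
    rintro rfl
    exact (((Real.one_lt_rpow hy (by norm_num)).trans_le hlower).trans_le hupper).ne' (pow_zero y)
  have hlogh : 0 ≤ Real.log h := Real.log_natCast_nonneg h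
  have hlog2 : 0 ≤ Real.log 2 := Real.log_nonneg one_le_two
  have hroot : 1 < y ^ (1 / 2 : ℝ) := Real.one_lt_rpow hy (by norm_num)
  have hmono : ∀ u v : ℝ, 1 < u → u ≤ v → Real.log (Real.log u) ≤ Real.log (Real.log v) :=
    fun u v hu huv => Real.log_le_log (Real.log_pos hu) (Real.log_le_log (by linarith) huv)
  have hl := hmono _ _ hroot hlower
  have hu := hmono _ _ (hroot.trans_le hlower) hupper
  rw [log_log_rpow hy (by norm_num), one_div, Real.log_inv] at hl
  rw [← Real.rpow_natCast, log_log_rpow hy (by positivity)] at hu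
  exact abs_le.2 ⟨by linarith, by linarith⟩

lemma rpow_div_log {y : ℝ} (hy : 1 < y) (A : ℝ) : y ^ (A / Real.log y) = Real.exp A := by
  rw [Real.rpow_def_of_pos (zero_lt_one.trans hy), mul_div_cancel₀ _ (Real.log_pos hy).ne']

lemma tendsto_log_log_atTop : Tendsto (fun y : ℝ => Real.log (Real.log y)) atTop atTop :=
  Real.tendsto_log_atTop.comp Real.tendsto_log_atTop

lemma isEquivalent_log_log_rpow {c : ℝ} (hc : 0 < c) :
    (fun x : ℝ => Real.log (Real.log (x ^ c))) ~[atTop] fun x => Real.log (Real.log x) := by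
  have hconst : (fun _ : ℝ => Real.log c) =o[atTop] fun x => Real.log (Real.log x) :=
    isLittleO_const_left.2 (Or.inr (tendsto_norm_atTop_atTop.comp tendsto_log_log_atTop))
  refine hconst.congr' ?_ EventuallyEq.rfl
  filter_upwards [eventually_gt_atTop 1] with x hx
  simp [log_log_rpow hx hc]

lemma isLittleO_rpow_id {r : ℝ} (hr : r < 1) : (fun x : ℝ => x ^ r) =o[atTop] fun x => x := by
  refine isLittleO_of_tendsto' ?_ ?_
  · filter_upwards [eventually_gt_atTop 0] with x hx hx₀ using absurd hx₀ hx.ne'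
  · refine (tendsto_rpow_neg_atTop (sub_pos.2 hr)).congr' ?_
    filter_upwards [eventually_gt_atTop 0] with x hx
    rw [neg_sub, Real.rpow_sub_one hx.ne']

lemma natCast_le_rpow_one_div_iff {h : ℕ} (hh : h ≠ 0) {n : ℕ} {x : ℝ} (hx : 0 ≤ x) :
    (n : ℝ) ≤ x ^ (1 / (h : ℝ)) ↔ (n : ℝ) ^ h ≤ x := by
  rw [one_div, Real.le_rpow_inv_iff_of_pos n.cast_nonneg hx (by positivity), Real.rpow_natCast]

lemma rpow_neg_sq_le {n : ℕ} (hn : n ≠ 0) {s : ℝ} (hs₁ : 1 ≤ s) :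
    ((n : ℝ) ^ (-s)) ^ 2 ≤ (n : ℝ) ^ (-2 : ℝ) := by
  rw [← Real.rpow_mul_natCast n.cast_nonneg]
  exact Real.rpow_le_rpow_of_exponent_le (Nat.one_le_cast.2 (Nat.one_le_iff_ne_zero.2 hn))
    (by push_cast; linarith)

lemma rpow_neg_one_add {x : ℝ} (hx : 0 < x) (δ : ℝ) : x ^ (-(1 + δ)) = x⁻¹ * x ^ (-δ) := by
  rw [neg_add, Real.rpow_add hx, Real.rpow_neg_one]

lemma add_add_sq_le (u v w : ℝ) : (u + v + w) ^ 2 ≤ 3 * (u ^ 2 + v ^ 2 + w ^ 2) := by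
  nlinarith [sq_nonneg (u - v), sq_nonneg (u - w), sq_nonneg (v - w)]

lemma ncard_le_tsum_ncard {α ι : Type*} {s : Set α} {t : ι → Set α} (hs : s.Finite)
    (ht : ∀ i, (t i).Finite) (hst : s ⊆ ⋃ i, t i) (hsum : Summable fun i => ((t i).ncard : ℝ)) :
    (s.ncard : ℝ) ≤ ∑' i, ((t i).ncard : ℝ) := by
  obtain ⟨I, hIfin, hI⟩ := Set.finite_subset_iUnion hs hst
  lift I to Finset ι using hIfin
  have hcover : s ⊆ ⋃ i ∈ I, t i := by simpa using hI
  calc (s.ncard : ℝ) ≤ ∑ i ∈ I, ((t i).ncard : ℝ) := by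
        exact_mod_cast (Set.ncard_le_ncard hcover (I.finite_toSet.biUnion fun i _ => ht i)).trans
          (I.set_ncard_biUnion_le t)
    _ ≤ ∑' i, ((t i).ncard : ℝ) := hsum.sum_le_tsum I fun _ _ => Nat.cast_nonneg _

lemma summable_prod_apply {ι M : Type*} [Fintype ι] {f : ι → M → ℝ} (hf₀ : ∀ i m, 0 ≤ f i m)
    (hf : ∀ i, Summable (f i)) : Summable fun b : ι → M => ∏ i, f i (b i) := by
  refine summable_of_sum_le (c := ∏ i, ∑' m, f i m)
    (fun b => Finset.prod_nonneg fun i _ => hf₀ i _) fun u => ?_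
  calc ∑ b ∈ u, ∏ i, f i (b i)
      ≤ ∑ b ∈ Fintype.piFinset fun i => u.image (· i), ∏ i, f i (b i) :=
        Finset.sum_le_sum_of_subset_of_nonneg
          (fun b hb => Fintype.mem_piFinset.2 fun i => Finset.mem_image_of_mem (· i) hb)
          fun b _ _ => Finset.prod_nonneg fun i _ => hf₀ i _
    _ = ∏ i, ∑ m ∈ u.image (· i), f i m := (Finset.prod_univ_sum _ _).symm
    _ ≤ ∏ i, ∑' m, f i m :=
        Finset.prod_le_prod (fun i _ => Finset.sum_nonneg fun m _ => hf₀ i m)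
          fun i _ => (hf i).sum_le_tsum _ fun m _ => hf₀ i m

lemma tsum_finset_prod_le_exp_tsum {ι : Type*} {u : ι → ℝ} (hu₀ : ∀ i, 0 ≤ u i)
    (hu : Summable u) : ∑' t : Finset ι, ∏ i ∈ t, u i ≤ Real.exp (∑' i, u i) := by
  refine (summable_finsetProd_of_summable_nonneg hu₀ hu).tsum_le_of_sum_le fun T => ?_
  calc ∑ t ∈ T, ∏ i ∈ t, u i ≤ ∑ t ∈ (T.sup id).powerset, ∏ i ∈ t, u i :=
        Finset.sum_le_sum_of_subset_of_nonneg
          (fun t ht => Finset.mem_powerset.2 (Finset.le_sup (f := id) ht))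
          fun t _ _ => Finset.prod_nonneg fun i _ => hu₀ i
    _ = ∏ i ∈ T.sup id, (1 + u i) := (Finset.prod_one_add _).symm
    _ ≤ ∏ i ∈ T.sup id, Real.exp (u i) :=
        Finset.prod_le_prod (fun i _ => add_nonneg zero_le_one (hu₀ i))
          fun i _ => (add_comm 1 (u i)).trans_le (Real.add_one_le_exp _)
    _ = Real.exp (∑ i ∈ T.sup id, u i) := (Real.exp_sum _ _).symm
    _ ≤ Real.exp (∑' i, u i) := Real.exp_le_exp.2 (hu.sum_le_tsum _ fun i _ => hu₀ i)

lemma sub_sq_le_log_one_add {u : ℝ} (hu : 0 ≤ u) : u - u ^ 2 ≤ Real.log (1 + u) := by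
  refine le_trans ?_ (Real.le_log_one_add_of_nonneg hu)
  rw [le_div_iff₀ (by positivity)]
  nlinarith [pow_nonneg hu 3]

/-! ### Dirichlet series of a norm function -/

section DirichletSeries

variable {α : Type*} {ν : α → ℕ} {κ : ℝ}

lemma sum_ncard_fiber_eq_ncard_le (hν : ∀ a, ν a ≠ 0) (hfin : ∀ n, {a | ν a ≤ n}.Finite) (n : ℕ) :
    ∑ k ∈ Finset.Icc 1 n, (ν ⁻¹' {k}).ncard = {a | ν a ≤ n}.ncard := by
  have hmaps : ∀ a ∈ (hfin n).toFinset, ν a ∈ Finset.Icc 1 n := fun a ha =>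
    Finset.mem_Icc.2 ⟨Nat.one_le_iff_ne_zero.2 (hν a), (hfin n).mem_toFinset.1 ha⟩
  rw [Set.ncard_eq_toFinset_card _ (hfin n), Finset.card_eq_sum_card_fiberwise hmaps]
  refine Finset.sum_congr rfl fun k hk => ?_
  rw [← Set.ncard_coe_finset]
  congr 1
  ext a
  have := (Finset.mem_Icc.1 hk).2
  simp only [Set.mem_preimage, Set.mem_singleton_iff, Finset.coe_filter, Set.Finite.mem_toFinset,
    Set.mem_ofPred_eq]
  omega

lemma tsum_fiber_rpow_neg (s : ℝ) (n : ℕ) :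
    ∑' a : ν ⁻¹' {n}, (ν a : ℝ) ^ (-s) = (ν ⁻¹' {n}).ncard * (n : ℝ) ^ (-s) := by
  rw [tsum_congr (g := fun _ => (n : ℝ) ^ (-s)) fun a => by rw [a.2], tsum_const, nsmul_eq_mul,
    Nat.card_coe_set_eq]

lemma term_ncard_fiber (hν : ∀ a, ν a ≠ 0) (s : ℝ) (n : ℕ) :
    LSeries.term (fun k => (((ν ⁻¹' {k}).ncard : ℝ) : ℂ)) s n =
      (((ν ⁻¹' {n}).ncard * (n : ℝ) ^ (-s) : ℝ) : ℂ) := by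
  rcases eq_or_ne n 0 with rfl | hn
  · have hempty : ν ⁻¹' {0} = ∅ := Set.eq_empty_of_forall_notMem hν
    simp [hempty]
  · rw [LSeries.term_of_ne_zero hn, Complex.ofReal_mul, Complex.ofReal_cpow n.cast_nonneg,
      Complex.ofReal_neg, Complex.cpow_neg, div_eq_mul_inv, Complex.ofReal_natCast n]

lemma summable_rpow_neg_of_tendsto_ncard_div (hν : ∀ a, ν a ≠ 0)
    (hfin : ∀ n, {a | ν a ≤ n}.Finite)
    (hlim : Tendsto (fun n : ℕ => ({a | ν a ≤ n}.ncard : ℝ) / n) atTop (𝓝 κ)) {s : ℝ}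
    (hs : 1 < s) : Summable fun a => (ν a : ℝ) ^ (-s) := by
  have hcount : (fun n => ∑ k ∈ Finset.Icc 1 n, ((ν ⁻¹' {k}).ncard : ℝ)) =O[atTop]
      fun n : ℕ => (n : ℝ) ^ (1 : ℝ) := by
    refine isBigO_atTop_natCast_rpow_of_tendsto_div_rpow (a := κ) ?_
    simp_rw [Real.rpow_one, ← Nat.cast_sum, sum_ncard_fiber_eq_ncard_le hν hfin]
    exact hlim
  have hseries : Summable fun n : ℕ => ((ν ⁻¹' {n}).ncard : ℝ) * (n : ℝ) ^ (-s) := by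
    have := LSeriesSummable_of_sum_norm_bigO_and_nonneg hcount (fun n => Nat.cast_nonneg _)
      zero_le_one (s := s) hs
    simpa only [LSeriesSummable, funext (term_ncard_fiber hν s), Complex.summable_ofReal] using this
  refine (summable_partition (s := fun n => ν ⁻¹' {n})
    (fun a => Real.rpow_nonneg (Nat.cast_nonneg _) _) fun a => ⟨ν a, rfl, fun _ h => h.symm⟩).2
    ⟨fun n => ?_, by simpa only [tsum_fiber_rpow_neg] using hseries⟩
  have : Finite (ν ⁻¹' {n}) := ((hfin n).subset fun a (ha : ν a = n) => ha.le).to_subtype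
  exact Summable.of_finite

lemma LSeries_ncard_fiber_eq_tsum (hν : ∀ a, ν a ≠ 0) {s : ℝ}
    (hsum : Summable fun a => (ν a : ℝ) ^ (-s)) :
    LSeries (fun k => (((ν ⁻¹' {k}).ncard : ℝ) : ℂ)) s = ((∑' a, (ν a : ℝ) ^ (-s) : ℝ) : ℂ) := by
  rw [← (hsum.hasSum.tsum_fiberwise ν).tsum_eq, Complex.ofReal_tsum]
  exact tsum_congr fun n => by rw [term_ncard_fiber hν, tsum_fiber_rpow_neg]

lemma tendsto_sub_one_mul_tsum_rpow_neg (hν : ∀ a, ν a ≠ 0) (hfin : ∀ n, {a | ν a ≤ n}.Finite)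
    (hlim : Tendsto (fun n : ℕ => ({a | ν a ≤ n}.ncard : ℝ) / n) atTop (𝓝 κ)) :
    Tendsto (fun s : ℝ => (s - 1) * ∑' a, (ν a : ℝ) ^ (-s)) (𝓝[>] 1) (𝓝 κ) := by
  have hpole := LSeries_tendsto_sub_mul_nhds_one_of_tendsto_sum_div_and_nonneg
    (f := fun k => ((ν ⁻¹' {k}).ncard : ℝ)) (l := κ)
    (by simpa only [← Nat.cast_sum, sum_ncard_fiber_eq_ncard_le hν hfin] using hlim)
    fun n => Nat.cast_nonneg _
  refine (Complex.continuous_re.tendsto (κ : ℂ)).comp hpole |>.congr' ?_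
  filter_upwards [self_mem_nhdsWithin] with s hs
  rw [Function.comp_apply, LSeries_ncard_fiber_eq_tsum hν
    (summable_rpow_neg_of_tendsto_ncard_div hν hfin hlim hs), ← Complex.ofReal_one,
    ← Complex.ofReal_sub, ← Complex.ofReal_mul, Complex.ofReal_re]

end DirichletSeries

/-! ### An abstract Turán inequality -/

lemma sum_card_filter_sub_sq {α ι : Type*} (A : Finset α) (Q : Finset ι) (r : ι → α → Prop)
    [∀ i a, Decidable (r i a)] (S : ℝ) :
    ∑ a ∈ A, ((Q.filter (r · a)).card - S) ^ 2 =
      ∑ i ∈ Q, ∑ j ∈ Q, ((A.filter fun a => r i a ∧ r j a).card : ℝ)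
        - 2 * S * ∑ i ∈ Q, ((A.filter (r i)).card : ℝ) + S ^ 2 * A.card := by
  have hsq : ∑ a ∈ A, ((Q.filter (r · a)).card : ℝ) ^ 2 =
      ∑ i ∈ Q, ∑ j ∈ Q, ((A.filter fun a => r i a ∧ r j a).card : ℝ) := by
    simp_rw [sq, Finset.card_filter, Nat.cast_sum, Finset.sum_mul_sum]
    rw [Finset.sum_comm]
    refine Finset.sum_congr rfl fun i _ => ?_
    rw [Finset.sum_comm]
    refine Finset.sum_congr rfl fun j _ => Finset.sum_congr rfl fun a _ => ?_
    by_cases hi : r i a <;> by_cases hj : r j a <;> simp [hi, hj]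
  have hlin : ∑ a ∈ A, ((Q.filter (r · a)).card : ℝ) = ∑ i ∈ Q, ((A.filter (r i)).card : ℝ) := by
    simp_rw [Finset.card_filter, Nat.cast_sum]
    exact Finset.sum_comm
  rw [← hsq, ← hlin, Finset.mul_sum, ← Finset.sum_sub_distrib, mul_comm (S ^ 2), ← nsmul_eq_mul,
    ← Finset.sum_const, ← Finset.sum_add_distrib]
  exact Finset.sum_congr rfl fun a _ => by ring

section Turan

variable {α ι : Type*} {A : Finset α} {Q : Finset ι} {r : ι → α → Prop}
  [∀ i a, Decidable (r i a)] {w : ι → ℝ} {X E : ℝ}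

lemma sum_card_filter_and_le (hX : 0 ≤ X) (hE : 0 ≤ E)
    (hcard : ∀ i ∈ Q, |(A.filter (r i)).card - X * w i| ≤ E)
    (hpair : ∀ i ∈ Q, ∀ j ∈ Q, i ≠ j →
      ((A.filter fun a => r i a ∧ r j a).card : ℝ) ≤ X * (w i * w j) + E) :
    ∑ i ∈ Q, ∑ j ∈ Q, ((A.filter fun a => r i a ∧ r j a).card : ℝ) ≤
      X * (∑ i ∈ Q, w i) ^ 2 + X * ∑ i ∈ Q, w i + 2 * (Q.card : ℝ) ^ 2 * E := by
  have hterm : ∀ i ∈ Q, ∀ j ∈ Q, ((A.filter fun a => r i a ∧ r j a).card : ℝ) ≤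
      X * (w i * w j) + 2 * E + if i = j then X * w i else 0 := by
    intro i hi j hj
    split_ifs with hij
    · subst hij
      have hdiag := (abs_le.1 (hcard i hi)).2
      have hnonneg : 0 ≤ X * (w i * w i) := mul_nonneg hX (mul_self_nonneg _)
      simp only [and_self]
      linarith
    · linarith [hpair i hi j hj hij]
  calc ∑ i ∈ Q, ∑ j ∈ Q, ((A.filter fun a => r i a ∧ r j a).card : ℝ)
      ≤ ∑ i ∈ Q, ∑ j ∈ Q, (X * (w i * w j) + 2 * E + if i = j then X * w i else 0) :=
        Finset.sum_le_sum fun i hi => Finset.sum_le_sum fun j hj => hterm i hi j hj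
    _ = X * (∑ i ∈ Q, w i) ^ 2 + X * ∑ i ∈ Q, w i + 2 * (Q.card : ℝ) ^ 2 * E := by
        simp only [Finset.sum_add_distrib, ← Finset.mul_sum, Finset.sum_const, nsmul_eq_mul,
          Finset.sum_ite_eq, ← Finset.sum_mul, ← Finset.sum_filter, Finset.filter_mem_eq_inter,
          Finset.inter_self]
        ring

lemma sum_card_filter_sub_sq_le (hX : 0 ≤ X) (hE : 0 ≤ E) (hw₀ : ∀ i ∈ Q, 0 ≤ w i)
    (hw₁ : ∀ i ∈ Q, w i ≤ 1) (hA : (A.card : ℝ) ≤ X + E)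
    (hcard : ∀ i ∈ Q, |(A.filter (r i)).card - X * w i| ≤ E)
    (hpair : ∀ i ∈ Q, ∀ j ∈ Q, i ≠ j →
      ((A.filter fun a => r i a ∧ r j a).card : ℝ) ≤ X * (w i * w j) + E) :
    ∑ a ∈ A, ((Q.filter (r · a)).card - ∑ i ∈ Q, w i) ^ 2 ≤
      X * ∑ i ∈ Q, w i + 5 * (Q.card : ℝ) ^ 2 * E := by
  set S := ∑ i ∈ Q, w i with hS
  set n : ℝ := (Q.card : ℝ) with hn
  have hS₀ : 0 ≤ S := Finset.sum_nonneg hw₀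
  have hSn : S ≤ n := by simpa using Finset.sum_le_card_nsmul Q w 1 hw₁
  have hsingle : X * S - n * E ≤ ∑ i ∈ Q, ((A.filter (r i)).card : ℝ) := by
    calc X * S - n * E = ∑ i ∈ Q, (X * w i - E) := by
          simp [Finset.sum_sub_distrib, ← Finset.mul_sum, hS, hn]
      _ ≤ _ := Finset.sum_le_sum fun i hi => by linarith [(abs_le.1 (hcard i hi)).1]
  have hSnE : S * n * E ≤ n ^ 2 * E := by
    rw [sq]; gcongr
  have hSSE : S ^ 2 * E ≤ n ^ 2 * E := by gcongr
  calc ∑ a ∈ A, ((Q.filter (r · a)).card - S) ^ 2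
      = _ := sum_card_filter_sub_sq A Q r S
    _ ≤ (X * S ^ 2 + X * S + 2 * n ^ 2 * E) - 2 * S * (X * S - n * E) + S ^ 2 * (X + E) := by
        gcongr
        exact sum_card_filter_and_le hX hE hcard hpair
    _ ≤ X * S + 5 * n ^ 2 * E := by linarith

end Turan

/-! ### Multiplicative functions on the free abelian monoid -/

/-- The completely multiplicative extension of `u : P → R` to the free abelian monoid on `P`. It is
used for the norm itself (`R = ℕ`) and for real powers of the norm (`R = ℝ`). -/
def mulExt {P R : Type*} [CommMonoid R] (u : P → R) (m : P →₀ ℕ) : R :=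
  m.prod fun p k => u p ^ k

/-- The squarefree element `∏_{p ∈ t} p` of the free abelian monoid. -/
def sqfreeElt {P : Type*} (t : Finset P) : P →₀ ℕ := Finsupp.indicator t fun _ _ => 1

section MulExt

variable {P R : Type*}

lemma mulExt_add [CommMonoid R] (u : P → R) (m n : P →₀ ℕ) :
    mulExt u (m + n) = mulExt u m * mulExt u n :=
  Finsupp.prod_add_index' (fun _ => pow_zero _) fun _ _ _ => pow_add _ _ _

lemma mulExt_single [CommMonoid R] (u : P → R) (p : P) (k : ℕ) :
    mulExt u (Finsupp.single p k) = u p ^ k :=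
  Finsupp.prod_single_index (pow_zero _)

lemma mulExt_nsmul [CommMonoid R] (u : P → R) (k : ℕ) (m : P →₀ ℕ) :
    mulExt u (k • m) = mulExt u m ^ k := by
  induction k with
  | zero => simp [mulExt]
  | succ k ih => rw [succ_nsmul, mulExt_add, ih, pow_succ]

lemma mulExt_sum [CommMonoid R] {ι : Type*} (u : P → R) (s : Finset ι) (b : ι → P →₀ ℕ) :
    mulExt u (∑ i ∈ s, b i) = ∏ i ∈ s, mulExt u (b i) :=
  (Finsupp.prod_finsetSum_index (fun _ => pow_zero _) fun _ _ _ => pow_add _ _ _).symm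

lemma mulExt_sqfreeElt [CommMonoid R] (u : P → R) (t : Finset P) :
    mulExt u (sqfreeElt t) = ∏ p ∈ t, u p := by
  simp [mulExt, sqfreeElt, Finset.prod_attach t u]

lemma mulExt_nonneg {u : P → ℝ} (hu : ∀ p, 0 ≤ u p) (m : P →₀ ℕ) : 0 ≤ mulExt u m :=
  Finset.prod_nonneg fun p _ => pow_nonneg (hu p) _

lemma Nm_eq_mulExt (N : P → ℕ) : Nm N = mulExt N := rfl

lemma Nm_rpow_eq_mulExt (N : P → ℕ) (m : P →₀ ℕ) (r : ℝ) :
    (Nm N m : ℝ) ^ r = mulExt (fun p => (N p : ℝ) ^ r) m := by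
  simp only [Nm, mulExt, Finsupp.prod, Nat.cast_prod, Nat.cast_pow]
  rw [← Real.finsetProd_rpow _ _ fun p _ => by positivity]
  exact Finset.prod_congr rfl fun p _ => (Real.rpow_pow_comm (N p).cast_nonneg _ _).symm

lemma sqfreeElt_apply (t : Finset P) (p : P) : sqfreeElt t p = if p ∈ t then 1 else 0 := by
  simp [sqfreeElt, Finsupp.indicator_apply]

lemma sqfreeElt_le_iff {t : Finset P} {m : P →₀ ℕ} : sqfreeElt t ≤ m ↔ t ⊆ m.support := by
  refine forall_congr' fun p => ?_
  by_cases hp : p ∈ t <;> simp [sqfreeElt_apply, hp, Nat.one_le_iff_ne_zero]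

lemma sqfreeElt_injective : Function.Injective (sqfreeElt : Finset P → P →₀ ℕ) :=
  fun s t hst => Finset.ext fun p => by
    have := DFunLike.congr_fun hst p
    rw [sqfreeElt_apply, sqfreeElt_apply] at this
    split_ifs at this <;> simp_all

lemma exists_eq_sqfreeElt_add_two_nsmul (m : P →₀ ℕ) : ∃ t b, m = sqfreeElt t + 2 • b := by
  refine ⟨m.support.filter fun p => m p % 2 = 1, m.mapRange (· / 2) rfl, Finsupp.ext fun p => ?_⟩
  simp only [Finsupp.add_apply, Finsupp.smul_apply, Finsupp.mapRange_apply, sqfreeElt_apply,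
    Finset.mem_filter, Finsupp.mem_support_iff, smul_eq_mul]
  grind

end MulExt

section EulerProduct

variable {P : Type*} {u : P → ℝ}

lemma summable_pow_of_summable_mulExt (hsum : Summable (mulExt u)) {k : ℕ} (hk : k ≠ 0) :
    Summable fun p => u p ^ k := by
  simpa only [Function.comp_def, mulExt_single] using
    hsum.comp_injective (Finsupp.single_left_injective hk)

lemma summable_of_summable_mulExt (hsum : Summable (mulExt u)) : Summable u := by
  simpa only [pow_one] using summable_pow_of_summable_mulExt hsum one_ne_zero

lemma one_le_tsum_mulExt (hu : ∀ p, 0 ≤ u p) (hsum : Summable (mulExt u)) :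
    1 ≤ ∑' m, mulExt u m := by
  simpa [mulExt] using hsum.le_tsum 0 fun m _ => mulExt_nonneg hu m

lemma prod_one_add_le_tsum_mulExt (hu : ∀ p, 0 ≤ u p) (hsum : Summable (mulExt u))
    (F : Finset P) : ∏ p ∈ F, (1 + u p) ≤ ∑' m, mulExt u m := by
  calc ∏ p ∈ F, (1 + u p) = ∑ m ∈ F.powerset.image sqfreeElt, mulExt u m := by
        rw [Finset.prod_one_add, Finset.sum_image sqfreeElt_injective.injOn]
        simp only [mulExt_sqfreeElt]
    _ ≤ ∑' m, mulExt u m := hsum.sum_le_tsum _ fun m _ => mulExt_nonneg hu m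

lemma summable_mulExt_sq (hsum : Summable (mulExt u)) :
    Summable fun m => mulExt u m ^ 2 := by
  have hinj : Function.Injective fun m : P →₀ ℕ => 2 • m := nsmul_right_injective two_ne_zero
  simpa only [Function.comp_def, mulExt_nsmul] using hsum.comp_injective hinj

lemma tsum_sub_tsum_sq_le_log_tsum_mulExt (hu : ∀ p, 0 ≤ u p) (hsum : Summable (mulExt u)) :
    ∑' p, u p - ∑' p, u p ^ 2 ≤ Real.log (∑' m, mulExt u m) := by
  have hu_sum := summable_of_summable_mulExt hsum
  have husq_sum := summable_pow_of_summable_mulExt hsum two_ne_zero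
  rw [← hu_sum.tsum_sub husq_sum]
  refine (hu_sum.sub husq_sum).tsum_le_of_sum_le fun F => ?_
  calc ∑ p ∈ F, (u p - u p ^ 2) ≤ ∑ p ∈ F, Real.log (1 + u p) :=
        Finset.sum_le_sum fun p _ => sub_sq_le_log_one_add (hu p)
    _ = Real.log (∏ p ∈ F, (1 + u p)) :=
        (Real.log_prod fun p _ => (add_pos_of_pos_of_nonneg one_pos (hu p)).ne').symm
    _ ≤ Real.log (∑' m, mulExt u m) :=
        Real.log_le_log (Finset.prod_pos fun p _ => add_pos_of_pos_of_nonneg one_pos (hu p))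
          (prod_one_add_le_tsum_mulExt hu hsum F)

-- Every element is a squarefree one times a square, and the squarefree ones sum to `∏ (1 + u p)`.
lemma tsum_mulExt_le_exp_tsum_mul (hu : ∀ p, 0 ≤ u p) (hsum : Summable (mulExt u)) :
    ∑' m, mulExt u m ≤ Real.exp (∑' p, u p) * ∑' m, mulExt u m ^ 2 := by
  have hu_sum := summable_of_summable_mulExt hsum
  have hsq_sum := summable_mulExt_sq hsum
  have hfin_sum := summable_finsetProd_of_summable_nonneg hu hu_sum
  have hprod_nonneg : ∀ t : Finset P, 0 ≤ ∏ p ∈ t, u p := fun t =>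
    Finset.prod_nonneg fun p _ => hu p
  have hpair_sum : Summable fun x : Finset P × (P →₀ ℕ) => (∏ p ∈ x.1, u p) * mulExt u x.2 ^ 2 :=
    hfin_sum.mul_of_nonneg hsq_sum hprod_nonneg fun m => sq_nonneg _
  choose t b hm using exists_eq_sqfreeElt_add_two_nsmul (P := P)
  have hinj : Function.Injective fun m => (t m, b m) := fun m n hmn => by
    obtain ⟨ht, hb⟩ := Prod.mk.inj hmn
    rw [hm m, hm n, ht, hb]
  calc ∑' m, mulExt u m = ∑' m, (∏ p ∈ t m, u p) * mulExt u (b m) ^ 2 := by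
        refine tsum_congr fun m => ?_
        rw [← mulExt_sqfreeElt, ← mulExt_nsmul, ← mulExt_add, ← hm]
    _ ≤ ∑' x : Finset P × (P →₀ ℕ), (∏ p ∈ x.1, u p) * mulExt u x.2 ^ 2 :=
        tsum_comp_le_tsum_of_inj hpair_sum
          (fun x => mul_nonneg (hprod_nonneg x.1) (sq_nonneg _)) hinj
    _ = (∑' s : Finset P, ∏ p ∈ s, u p) * ∑' m, mulExt u m ^ 2 :=
        (hfin_sum.tsum_mul_tsum hsq_sum hpair_sum).symm
    _ ≤ Real.exp (∑' p, u p) * ∑' m, mulExt u m ^ 2 :=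
        mul_le_mul_of_nonneg_right (tsum_finset_prod_le_exp_tsum hu hu_sum)
          (tsum_nonneg fun m => sq_nonneg _)

lemma log_tsum_mulExt_le (hu : ∀ p, 0 ≤ u p) (hsum : Summable (mulExt u)) :
    Real.log (∑' m, mulExt u m) ≤ ∑' p, u p + Real.log (∑' m, mulExt u m ^ 2) := by
  have hpos : 0 < ∑' m, mulExt u m := one_pos.trans_le (one_le_tsum_mulExt hu hsum)
  have hmul := tsum_mulExt_le_exp_tsum_mul hu hsum
  have hsq_pos : 0 < ∑' m, mulExt u m ^ 2 :=
    pos_of_mul_pos_right (hpos.trans_le hmul) (Real.exp_pos _).le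
  rw [← Real.log_exp (∑' p, u p), ← Real.log_mul (Real.exp_ne_zero _) hsq_pos.ne']
  exact Real.log_le_log hpos hmul

end EulerProduct

/-! ### Consequences of Condition (★) -/

/-- The counting function `I(x) = #{m : N(m) ≤ x}`; it is `0` when that set is infinite. -/
def normCount {P : Type*} (N : P → ℕ) (x : ℝ) : ℕ := {m : P →₀ ℕ | (Nm N m : ℝ) ≤ x}.ncard

/-- The prime zeta function `∑_p N(p)^{-s}` of the prime system; like `zetaM` it takes the junk
value `0` where the series diverges. -/
def primeZeta {P : Type*} (N : P → ℕ) (s : ℝ) : ℝ := ∑' p, (N p : ℝ) ^ (-s)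

lemma zetaM_eq_tsum_rpow_neg {P : Type*} (N : P → ℕ) (s : ℝ) :
    zetaM N s = ∑' m, (Nm N m : ℝ) ^ (-s) :=
  tsum_congr fun m => by rw [one_div, Real.rpow_neg (Nat.cast_nonneg _)]

lemma zetaM_eq_tsum_mulExt {P : Type*} (N : P → ℕ) (s : ℝ) :
    zetaM N s = ∑' m, mulExt (fun p => (N p : ℝ) ^ (-s)) m := by
  simp only [zetaM_eq_tsum_rpow_neg, Nm_rpow_eq_mulExt]

namespace StarCond

variable {P : Type*} {N : P → ℕ} {κ θ : ℝ}

lemma tendsto_normCount_div (hs : StarCond N κ θ) :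
    Tendsto (fun x : ℝ => (normCount N x : ℝ) / x) atTop (𝓝 κ) := by
  obtain ⟨-, -, hθ, hO⟩ := hs
  have herr := (hO.trans_isLittleO (isLittleO_rpow_id hθ)).tendsto_div_nhds_zero.add_const κ
  rw [zero_add] at herr
  refine herr.congr' ?_
  filter_upwards [eventually_gt_atTop 0] with x hx
  rw [normCount]
  field_simp
  ring

lemma finite_Nm_le (hs : StarCond N κ θ) (x : ℝ) : {m : P →₀ ℕ | (Nm N m : ℝ) ≤ x}.Finite := by
  have hev := (hs.tendsto_normCount_div.eventually_ne hs.1.ne').and (eventually_ge_atTop x)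
  obtain ⟨y, hy, hxy⟩ := hev.exists
  have hcard : normCount N y ≠ 0 := fun h => hy (by simp [h])
  exact (Set.finite_of_ncard_ne_zero hcard).subset fun m hm => le_trans hm hxy

lemma two_le (hs : StarCond N κ θ) (p : P) : 2 ≤ N p := by
  by_contra! hp
  refine Set.infinite_of_injective_forall_mem (Finsupp.single_injective p) (fun k => ?_)
    (hs.finite_Nm_le 1)
  have hle : N p ^ k ≤ 1 := pow_le_one₀ (Nat.zero_le _) (by lia)
  simpa [Nm_eq_mulExt, mulExt_single] using hle

lemma one_le_cast_prime (hs : StarCond N κ θ) (p : P) : (1 : ℝ) ≤ N p :=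
  Nat.one_le_cast.2 (one_le_two.trans (hs.two_le p))

lemma cast_prime_pos (hs : StarCond N κ θ) (p : P) : (0 : ℝ) < N p :=
  zero_lt_one.trans_le (hs.one_le_cast_prime p)

lemma Nm_pos (hs : StarCond N κ θ) (m : P →₀ ℕ) : 0 < Nm N m :=
  Finset.prod_pos fun p _ => pow_pos (zero_lt_two.trans_le (hs.two_le p)) _

lemma normCount_mono (hs : StarCond N κ θ) : Monotone (normCount N) := fun _ y hxy =>
  Set.ncard_le_ncard (fun _ hm => le_trans hm hxy) (hs.finite_Nm_le y)

lemma exists_abs_normCount_sub_le (hs : StarCond N κ θ) :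
    ∃ C, 0 ≤ C ∧ ∀ x : ℝ, 1 ≤ x → |normCount N x - κ * x| ≤ C * x ^ θ := by
  obtain ⟨c, hc⟩ := hs.2.2.2.bound
  obtain ⟨x₀, hx₀⟩ := eventually_atTop.1 hc
  have hκ := hs.1
  refine ⟨max |c| (normCount N x₀ + κ * x₀), le_max_of_le_left (abs_nonneg c), fun x hx => ?_⟩
  have hpow : 1 ≤ x ^ θ := Real.one_le_rpow hx hs.2.1
  rcases le_total x₀ x with hxx₀ | hxx₀
  · have hbound := hx₀ x hxx₀
    rw [Real.norm_eq_abs, Real.norm_of_nonneg (by positivity)] at hbound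
    refine hbound.trans ?_
    gcongr
    exact (le_abs_self c).trans (le_max_left _ _)
  · calc |normCount N x - κ * x| ≤ normCount N x + κ * x := by
          have hκx : 0 ≤ κ * x := by positivity
          exact abs_le.2 ⟨by linarith [(normCount N x).cast_nonneg (α := ℝ)], by linarith⟩
      _ ≤ normCount N x₀ + κ * x₀ := by
          gcongr
          exact hs.normCount_mono hxx₀
      _ ≤ max |c| (normCount N x₀ + κ * x₀) * 1 := by rw [mul_one]; exact le_max_right _ _
      _ ≤ _ := by gcongr

lemma exists_normCount_le (hs : StarCond N κ θ) :
    ∃ D, 0 ≤ D ∧ ∀ x : ℝ, 0 ≤ x → (normCount N x : ℝ) ≤ D * x := by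
  obtain ⟨C, hC, hcount⟩ := hs.exists_abs_normCount_sub_le
  have hκ := hs.1
  refine ⟨κ + C, by positivity, fun x hx => ?_⟩
  rcases lt_or_ge x 1 with hx₁ | hx₁
  · have hempty : {m : P →₀ ℕ | (Nm N m : ℝ) ≤ x} = ∅ := by
      refine Set.eq_empty_of_forall_notMem fun m hm => ?_
      have : (1 : ℝ) ≤ Nm N m := by exact_mod_cast hs.Nm_pos m
      exact (this.trans hm).not_gt hx₁
    rw [normCount, hempty, Set.ncard_empty, Nat.cast_zero]
    positivity
  · have hpow : x ^ θ ≤ x := by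
      simpa only [Real.rpow_one] using Real.rpow_le_rpow_of_exponent_le hx₁ hs.2.2.1.le
    have := (abs_le.1 (hcount x hx₁)).2
    nlinarith [mul_le_mul_of_nonneg_left hpow hC]

/-- The finite set of elements of norm at most `x`. -/
def elements (hs : StarCond N κ θ) (x : ℝ) : Finset (P →₀ ℕ) := (hs.finite_Nm_le x).toFinset

lemma mem_elements (hs : StarCond N κ θ) {x : ℝ} {m : P →₀ ℕ} :
    m ∈ hs.elements x ↔ (Nm N m : ℝ) ≤ x := (hs.finite_Nm_le x).mem_toFinset

lemma card_elements (hs : StarCond N κ θ) (x : ℝ) : (hs.elements x).card = normCount N x :=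
  (Set.ncard_eq_toFinset_card _ _).symm

lemma finite_prime_le (hs : StarCond N κ θ) (z : ℝ) : {p : P | (N p : ℝ) ≤ z}.Finite := by
  refine ((hs.finite_Nm_le z).preimage
    (Finsupp.single_left_injective (one_ne_zero (α := ℕ))).injOn).subset fun p hp => ?_
  simpa [Nm_eq_mulExt, mulExt_single] using hp

/-- The finite set of prime elements of norm at most `z`. -/
def primes (hs : StarCond N κ θ) (z : ℝ) : Finset P := (hs.finite_prime_le z).toFinset

lemma mem_primes (hs : StarCond N κ θ) {z : ℝ} {p : P} : p ∈ hs.primes z ↔ (N p : ℝ) ≤ z :=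
  (hs.finite_prime_le z).mem_toFinset

lemma card_primes_le_normCount (hs : StarCond N κ θ) (z : ℝ) :
    (hs.primes z).card ≤ normCount N z := by
  rw [← hs.card_elements]
  refine Finset.card_le_card_of_injOn (Finsupp.single · 1) (fun p hp => ?_)
    (Finsupp.single_left_injective one_ne_zero).injOn
  have := hs.mem_primes.1 hp
  simpa [mem_elements, Nm_eq_mulExt, mulExt_single] using this

lemma exists_card_primes_le (hs : StarCond N κ θ) :
    ∃ D, ∀ z : ℝ, 0 ≤ z → ((hs.primes z).card : ℝ) ≤ D * z := by
  obtain ⟨D, -, hcount⟩ := hs.exists_normCount_le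
  exact ⟨D, fun z hz => (Nat.cast_le.2 (hs.card_primes_le_normCount z)).trans (hcount z hz)⟩

lemma card_filter_subset_support (hs : StarCond N κ θ) (t : Finset P) (x : ℝ) :
    ((hs.elements x).filter fun a => t ⊆ a.support).card =
      normCount N (x / ∏ p ∈ t, (N p : ℝ)) := by
  have hNm : ∀ b, (Nm N (sqfreeElt t + b) : ℝ) = (∏ p ∈ t, (N p : ℝ)) * Nm N b := fun b => by
    simp only [Nm_eq_mulExt, mulExt_add, mulExt_sqfreeElt, Nat.cast_mul, Nat.cast_prod]
  have hpos : (0 : ℝ) < ∏ p ∈ t, (N p : ℝ) := Finset.prod_pos fun p _ => hs.cast_prime_pos p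
  rw [← hs.card_elements]
  refine (Finset.card_bij (fun b _ => sqfreeElt t + b) (fun b hb => ?_)
    (fun b _ c _ h => add_left_cancel h) fun a ha => ?_).symm
  · rw [mem_elements, le_div_iff₀' hpos, ← hNm] at hb
    exact Finset.mem_filter.2 ⟨hs.mem_elements.2 hb, sqfreeElt_le_iff.1 le_self_add⟩
  · obtain ⟨hax, hta⟩ := Finset.mem_filter.1 ha
    have ha_eq : sqfreeElt t + (a - sqfreeElt t) = a :=
      add_tsub_cancel_of_le (sqfreeElt_le_iff.2 hta)
    refine ⟨a - sqfreeElt t, ?_, ha_eq⟩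
    rwa [mem_elements, le_div_iff₀' hpos, ← hNm, ha_eq, ← hs.mem_elements]

/-! ### The Mertens sum -/

lemma finite_Nm_le_nat (hs : StarCond N κ θ) (n : ℕ) : {m : P →₀ ℕ | Nm N m ≤ n}.Finite := by
  simpa only [Nat.cast_le] using hs.finite_Nm_le n

lemma tendsto_ncard_Nm_le_div (hs : StarCond N κ θ) :
    Tendsto (fun n : ℕ => ({m : P →₀ ℕ | Nm N m ≤ n}.ncard : ℝ) / n) atTop (𝓝 κ) := by
  simpa only [Function.comp_def, normCount, Nat.cast_le] using
    hs.tendsto_normCount_div.comp tendsto_natCast_atTop_atTop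

lemma summable_Nm_rpow_neg (hs : StarCond N κ θ) {s : ℝ} (hs₁ : 1 < s) :
    Summable fun m => (Nm N m : ℝ) ^ (-s) :=
  summable_rpow_neg_of_tendsto_ncard_div (fun m => (hs.Nm_pos m).ne') hs.finite_Nm_le_nat
    hs.tendsto_ncard_Nm_le_div hs₁

lemma summable_mulExt_rpow_neg (hs : StarCond N κ θ) {s : ℝ} (hs₁ : 1 < s) :
    Summable (mulExt fun p => (N p : ℝ) ^ (-s)) := by
  simpa only [Nm_rpow_eq_mulExt] using hs.summable_Nm_rpow_neg hs₁

lemma summable_prime_rpow_neg (hs : StarCond N κ θ) {s : ℝ} (hs₁ : 1 < s) :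
    Summable fun p => (N p : ℝ) ^ (-s) :=
  summable_of_summable_mulExt (hs.summable_mulExt_rpow_neg hs₁)

lemma one_le_zetaM (hs : StarCond N κ θ) {s : ℝ} (hs₁ : 1 < s) : 1 ≤ zetaM N s := by
  rw [zetaM_eq_tsum_mulExt]
  exact one_le_tsum_mulExt (fun p => by positivity) (hs.summable_mulExt_rpow_neg hs₁)

lemma tendsto_sub_one_mul_zetaM (hs : StarCond N κ θ) :
    Tendsto (fun s => (s - 1) * zetaM N s) (𝓝[>] 1) (𝓝 κ) := by
  simpa only [zetaM_eq_tsum_rpow_neg] using tendsto_sub_one_mul_tsum_rpow_neg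
    (fun m => (hs.Nm_pos m).ne') hs.finite_Nm_le_nat hs.tendsto_ncard_Nm_le_div

lemma primeZeta_sub_log_zetaM_le (hs : StarCond N κ θ) {s : ℝ} (hs₁ : 1 < s) :
    primeZeta N s - Real.log (zetaM N s) ≤ primeZeta N 2 := by
  have hsq : ∑' p, ((N p : ℝ) ^ (-s)) ^ 2 ≤ primeZeta N 2 :=
    (summable_pow_of_summable_mulExt (hs.summable_mulExt_rpow_neg hs₁) two_ne_zero).tsum_le_tsum
      (fun p => rpow_neg_sq_le (zero_lt_two.trans_le (hs.two_le p)).ne' hs₁.le)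
      (hs.summable_prime_rpow_neg one_lt_two)
  have hlog := tsum_sub_tsum_sq_le_log_tsum_mulExt (fun p => by positivity)
    (hs.summable_mulExt_rpow_neg hs₁)
  rw [← zetaM_eq_tsum_mulExt] at hlog
  rw [primeZeta]
  linarith

lemma log_zetaM_sub_primeZeta_le (hs : StarCond N κ θ) {s : ℝ} (hs₁ : 1 < s) :
    Real.log (zetaM N s) - primeZeta N s ≤ Real.log (zetaM N 2) := by
  have hsummable := summable_mulExt_sq (hs.summable_mulExt_rpow_neg hs₁)
  have hsq : ∑' m, mulExt (fun p => (N p : ℝ) ^ (-s)) m ^ 2 ≤ zetaM N 2 := by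
    simp only [zetaM_eq_tsum_rpow_neg, ← Nm_rpow_eq_mulExt] at hsummable ⊢
    exact hsummable.tsum_le_tsum (fun m => rpow_neg_sq_le (hs.Nm_pos m).ne' hs₁.le)
      (hs.summable_Nm_rpow_neg one_lt_two)
  have hpos : 0 < ∑' m, mulExt (fun p => (N p : ℝ) ^ (-s)) m ^ 2 := by
    refine hsummable.tsum_pos (fun m => sq_nonneg _) 0 ?_
    simp [mulExt]
  have hlog := log_tsum_mulExt_le (fun p => by positivity) (hs.summable_mulExt_rpow_neg hs₁)
  rw [← zetaM_eq_tsum_mulExt] at hlog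
  rw [primeZeta]
  linarith [Real.log_le_log hpos hsq]

lemma isBigO_primeZeta_add_log_sub_one (hs : StarCond N κ θ) :
    (fun s => primeZeta N s + Real.log (s - 1)) =O[𝓝[>] 1] fun _ => (1 : ℝ) := by
  have hlog : (fun s => Real.log ((s - 1) * zetaM N s)) =O[𝓝[>] 1] fun _ => (1 : ℝ) :=
    (hs.tendsto_sub_one_mul_zetaM.log hs.1.ne').isBigO_one ℝ
  have hdiff : (fun s => primeZeta N s - Real.log (zetaM N s)) =O[𝓝[>] 1] fun _ => (1 : ℝ) := by
    refine IsBigO.of_bound (max (primeZeta N 2) (Real.log (zetaM N 2))) ?_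
    filter_upwards [self_mem_nhdsWithin] with s hs₁
    rw [norm_one, mul_one, Real.norm_eq_abs]
    refine abs_le'.2 ⟨le_max_of_le_left (hs.primeZeta_sub_log_zetaM_le hs₁), ?_⟩
    rw [neg_sub]
    exact le_max_of_le_right (hs.log_zetaM_sub_primeZeta_le hs₁)
  refine (hdiff.add hlog).congr' ?_ EventuallyEq.rfl
  filter_upwards [self_mem_nhdsWithin] with s (hs₁ : 1 < s)
  rw [Real.log_mul (sub_pos.2 hs₁).ne' (one_pos.trans_le (hs.one_le_zetaM hs₁)).ne']
  ring

lemma isEquivalent_primeZeta_log_log (hs : StarCond N κ θ) {A : ℝ} (hA : 0 < A) :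
    (fun y => primeZeta N (1 + A / Real.log y)) ~[atTop] fun y => Real.log (Real.log y) := by
  have hone : Tendsto (fun y => 1 + A / Real.log y) atTop (𝓝[>] 1) := by
    refine tendsto_nhdsWithin_iff.2 ⟨?_, ?_⟩
    · simpa using (Real.tendsto_log_atTop.const_div_atTop A).const_add 1
    · filter_upwards [eventually_gt_atTop 1] with y hy
      exact lt_add_of_pos_right 1 (div_pos hA (Real.log_pos hy))
  have hbdd : (fun y => primeZeta N (1 + A / Real.log y) - Real.log (Real.log y)) =O[atTop]
      fun _ => (1 : ℝ) := by
    refine ((hs.isBigO_primeZeta_add_log_sub_one.comp_tendsto hone).sub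
      (isBigO_const_const (Real.log A) one_ne_zero _)).congr' ?_ EventuallyEq.rfl
    filter_upwards [eventually_gt_atTop 1] with y hy
    rw [Function.comp_apply, add_sub_cancel_left, Real.log_div hA.ne' (Real.log_pos hy).ne']
    ring
  exact hbdd.trans_isLittleO (isLittleO_const_left.2
    (Or.inr (tendsto_norm_atTop_atTop.comp tendsto_log_log_atTop)))

/-- The Mertens sum `∑_{N(p) ≤ y} 1/N(p)`. -/
def mertensSum (hs : StarCond N κ θ) (y : ℝ) : ℝ := ∑ p ∈ hs.primes y, (N p : ℝ)⁻¹

lemma mertensSum_le_exp_mul_primeZeta (hs : StarCond N κ θ) {A y : ℝ} (hA : 0 < A) (hy : 1 < y) :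
    hs.mertensSum y ≤ Real.exp A * primeZeta N (1 + A / Real.log y) := by
  have hδ : 0 < A / Real.log y := div_pos hA (Real.log_pos hy)
  have hterm : ∀ p ∈ hs.primes y,
      (N p : ℝ)⁻¹ ≤ Real.exp A * (N p : ℝ) ^ (-(1 + A / Real.log y)) := fun p hp => by
    have hpos := hs.cast_prime_pos p
    rw [rpow_neg_one_add hpos, Real.rpow_neg hpos.le, ← mul_assoc, ← div_eq_mul_inv,
      le_div_iff₀ (by positivity), mul_comm]
    gcongr
    rw [← rpow_div_log hy A]
    exact Real.rpow_le_rpow hpos.le (hs.mem_primes.1 hp) hδ.le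
  refine (Finset.sum_le_sum hterm).trans ?_
  rw [← Finset.mul_sum]
  gcongr
  exact (hs.summable_prime_rpow_neg (by linarith)).sum_le_tsum _ fun p _ => by positivity

lemma prime_rpow_neg_le_indicator_add (hs : StarCond N κ θ) {A y : ℝ} (hA : 1 ≤ A) (hy : 1 < y)
    (p : P) : (N p : ℝ) ^ (-(1 + A / Real.log y)) ≤
      (hs.primes y : Set P).indicator (fun p => (N p : ℝ)⁻¹) p +
        Real.exp (1 - A) * (N p : ℝ) ^ (-(1 + 1 / Real.log y)) := by
  have hlog := Real.log_pos hy
  have hpos := hs.cast_prime_pos p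
  by_cases hp : p ∈ hs.primes y
  · rw [Set.indicator_of_mem (Finset.mem_coe.2 hp), rpow_neg_one_add hpos]
    have hle : (N p : ℝ) ^ (-(A / Real.log y)) ≤ 1 :=
      Real.rpow_le_one_of_one_le_of_nonpos (hs.one_le_cast_prime p) (neg_nonpos.2 (by positivity))
    exact (mul_le_of_le_one_right (by positivity) hle).trans
      (le_add_of_nonneg_right (by positivity))
  · have hyp : y ≤ N p := (not_le.1 (mt hs.mem_primes.2 hp)).le
    have hexponent : -(1 + A / Real.log y) = (1 - A) / Real.log y + -(1 + 1 / Real.log y) := by ring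
    rw [Set.indicator_of_notMem (mt Finset.mem_coe.1 hp), zero_add, ← rpow_div_log hy, hexponent,
      Real.rpow_add hpos]
    gcongr ?_ * _
    exact Real.rpow_le_rpow_of_nonpos (zero_lt_one.trans hy) hyp
      (div_nonpos_of_nonpos_of_nonneg (sub_nonpos.2 hA) hlog.le)

lemma primeZeta_le_mertensSum_add (hs : StarCond N κ θ) {A y : ℝ} (hA : 1 ≤ A) (hy : 1 < y) :
    primeZeta N (1 + A / Real.log y) ≤
      hs.mertensSum y + Real.exp (1 - A) * primeZeta N (1 + 1 / Real.log y) := by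
  have hsum : ∀ B, 0 < B → Summable fun p => (N p : ℝ) ^ (-(1 + B / Real.log y)) := fun B hB =>
    hs.summable_prime_rpow_neg (lt_add_of_pos_right 1 (div_pos hB (Real.log_pos hy)))
  have hmertens :
      HasSum ((hs.primes y : Set P).indicator fun p => (N p : ℝ)⁻¹) (hs.mertensSum y) :=
    hasSum_subtype_iff_indicator.1 ((hs.primes y).hasSum fun p => (N p : ℝ)⁻¹)
  exact hasSum_le (hs.prime_rpow_neg_le_indicator_add hA hy)
    (hsum A (one_pos.trans_le hA)).hasSum (hmertens.add ((hsum 1 one_pos).hasSum.mul_left _))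

-- Rankin's trick with exponents `1 + A / log y`, letting `A → 0` above and `A → ∞` below.
lemma isEquivalent_mertensSum_log_log (hs : StarCond N κ θ) :
    hs.mertensSum ~[atTop] fun y => Real.log (Real.log y) := by
  have hL : ∀ᶠ y : ℝ in atTop, 0 < Real.log (Real.log y) :=
    tendsto_log_log_atTop.eventually_gt_atTop 0
  have hratio : ∀ A, 0 < A → Tendsto (fun y =>
      primeZeta N (1 + A / Real.log y) / Real.log (Real.log y)) atTop (𝓝 1) := fun A hA =>
    (isEquivalent_iff_tendsto_one (hL.mono fun y hy => hy.ne')).1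
      (hs.isEquivalent_primeZeta_log_log hA)
  refine (isEquivalent_iff_tendsto_one (hL.mono fun y hy => hy.ne')).2 (tendsto_order.2 ⟨?_, ?_⟩)
  · intro a ha
    set A := max 1 (2 - Real.log (1 - a))
    have hexp : a < 1 - Real.exp (1 - A) * 1 := by
      have : Real.exp (1 - A) < 1 - a := by
        rw [← Real.lt_log_iff_exp_lt (by linarith)]
        linarith [le_max_right 1 (2 - Real.log (1 - a))]
      linarith
    have hlim := (hratio A (one_pos.trans_le (le_max_left _ _))).sub
      ((hratio 1 one_pos).const_mul (Real.exp (1 - A)))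
    filter_upwards [hlim.eventually_const_lt hexp, hL, eventually_gt_atTop 1] with y hlt hLy hy
    refine hlt.trans_le ?_
    rw [mul_div_assoc', ← sub_div]
    exact div_le_div_of_nonneg_right
      (sub_le_iff_le_add.2 (hs.primeZeta_le_mertensSum_add (le_max_left _ _) hy)) hLy.le
  · intro b hb
    have hlogb := Real.log_pos hb
    have hexp : Real.exp (Real.log b / 2) * 1 < b := by
      rw [mul_one, ← Real.lt_log_iff_exp_lt (by linarith)]
      linarith
    have hlim := (hratio _ (half_pos hlogb)).const_mul (Real.exp (Real.log b / 2))
    filter_upwards [hlim.eventually_lt_const hexp, hL, eventually_gt_atTop 1] with y hlt hLy hy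
    refine lt_of_le_of_lt ?_ hlt
    rw [mul_div_assoc']
    exact div_le_div_of_nonneg_right (hs.mertensSum_le_exp_mul_primeZeta (half_pos hlogb) hy) hLy.le

/-! ### The normal order over all elements -/

lemma exists_abs_card_filter_subset_support_sub_le (hs : StarCond N κ θ) :
    ∃ C, 0 ≤ C ∧ ∀ (x : ℝ) (t : Finset P), ∏ p ∈ t, (N p : ℝ) ≤ x →
      |((hs.elements x).filter fun a => t ⊆ a.support).card - κ * x * ∏ p ∈ t, (N p : ℝ)⁻¹| ≤
        C * x ^ θ := by
  obtain ⟨C, hC, hcount⟩ := hs.exists_abs_normCount_sub_le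
  refine ⟨C, hC, fun x t htx => ?_⟩
  have hone : (1 : ℝ) ≤ ∏ p ∈ t, (N p : ℝ) :=
    Finset.one_le_prod fun p _ => hs.one_le_cast_prime p
  have hdiv := (one_le_div (one_pos.trans_le hone)).2 htx
  have hx : 0 ≤ x := (zero_le_one.trans hone).trans htx
  rw [hs.card_filter_subset_support, Finset.prod_inv_distrib, mul_assoc, ← div_eq_mul_inv]
  refine (hcount _ hdiv).trans ?_
  gcongr
  · exact hs.2.1
  · exact div_le_self hx hone

/-- The number of prime elements of norm at most `z` in the support of `a`. -/
def omegaUpTo (hs : StarCond N κ θ) (z : ℝ) (a : P →₀ ℕ) : ℕ :=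
  ((hs.primes z).filter (· ∈ a.support)).card

lemma exists_sum_omegaUpTo_sub_sq_le (hs : StarCond N κ θ) :
    ∃ C, 0 ≤ C ∧ ∀ x z : ℝ, 1 ≤ z → z ^ 2 ≤ x →
      ∑ a ∈ hs.elements x, (hs.omegaUpTo z a - hs.mertensSum z) ^ 2 ≤
        κ * x * hs.mertensSum z + C * (z ^ 2 * x ^ θ) := by
  obtain ⟨C, hC, hcount⟩ := hs.exists_abs_card_filter_subset_support_sub_le
  obtain ⟨D, hcard⟩ := hs.exists_card_primes_le
  refine ⟨5 * D ^ 2 * C, by positivity, fun x z hz hzx => ?_⟩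
  have hx : 1 ≤ x := (one_le_pow₀ hz).trans hzx
  have hκ := hs.1
  have hprime : ∀ p ∈ hs.primes z, (N p : ℝ) ≤ z := fun p => hs.mem_primes.1
  have htotal : ((hs.elements x).card : ℝ) ≤ κ * x + C * x ^ θ := by
    have := (abs_le.1 (hcount x ∅ (by simpa using hx))).2
    simp only [Finset.empty_subset, Finset.filter_true, Finset.prod_empty, mul_one] at this
    linarith
  have hsingle : ∀ p ∈ hs.primes z,
      |((hs.elements x).filter (p ∈ ·.support)).card - κ * x * (N p : ℝ)⁻¹| ≤ C * x ^ θ :=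
    fun p hp => by
      simpa using hcount x {p} (by simpa using (hprime p hp).trans (by nlinarith))
  have hpair : ∀ p ∈ hs.primes z, ∀ q ∈ hs.primes z, p ≠ q →
      (((hs.elements x).filter fun a => p ∈ a.support ∧ q ∈ a.support).card : ℝ) ≤
        κ * x * ((N p : ℝ)⁻¹ * (N q : ℝ)⁻¹) + C * x ^ θ := fun p hp q hq hpq => by
    have hpqx : (N p : ℝ) * N q ≤ x := by
      refine (mul_le_mul (hprime p hp) (hprime q hq) (by positivity) (by positivity)).trans ?_
      rwa [← sq]
    have := (abs_le.1 (hcount x {p, q} (by rwa [Finset.prod_pair hpq]))).2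
    simp only [Finset.prod_pair hpq, Finset.insert_subset_iff, Finset.singleton_subset_iff] at this
    linarith
  calc ∑ a ∈ hs.elements x, (hs.omegaUpTo z a - hs.mertensSum z) ^ 2
      ≤ κ * x * hs.mertensSum z + 5 * ((hs.primes z).card : ℝ) ^ 2 * (C * x ^ θ) :=
        sum_card_filter_sub_sq_le (by positivity) (by positivity) (fun p _ => by positivity)
          (fun p _ => inv_le_one_of_one_le₀ (hs.one_le_cast_prime p)) htotal hsingle hpair
    _ ≤ κ * x * hs.mertensSum z + 5 * (D * z) ^ 2 * (C * x ^ θ) := by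
        gcongr
        exact hcard z (by linarith)
    _ = κ * x * hs.mertensSum z + 5 * D ^ 2 * C * (z ^ 2 * x ^ θ) := by ring

lemma pow_card_filter_support_le_Nm (hs : StarCond N κ θ) {z : ℝ} (hz : 0 ≤ z) (a : P →₀ ℕ) :
    z ^ (a.support.filter fun p => z < N p).card ≤ Nm N a := by
  calc z ^ (a.support.filter fun p => z < N p).card
      = ∏ _p ∈ a.support.filter fun p => z < N p, z := (Finset.prod_const z).symm
    _ ≤ ∏ p ∈ a.support.filter fun p => z < N p, (N p : ℝ) ^ a p := by
        refine Finset.prod_le_prod (fun _ _ => hz) fun p hp => ?_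
        obtain ⟨hpa, hzp⟩ := Finset.mem_filter.1 hp
        exact hzp.le.trans (le_self_pow₀ (hs.one_le_cast_prime p) (Finsupp.mem_support_iff.1 hpa))
    _ ≤ Nm N a := by
        exact_mod_cast Finset.prod_le_prod_of_subset_of_one_le' (Finset.filter_subset _ a.support)
          fun p _ _ => Nat.one_le_pow _ _ (zero_lt_two.trans_le (hs.two_le p))

lemma omegaM_eq_omegaUpTo_add (hs : StarCond N κ θ) (z : ℝ) (a : P →₀ ℕ) :
    omegaM a = hs.omegaUpTo z a + (a.support.filter fun p => z < N p).card := by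
  rw [omegaM, ← Finset.card_filter_add_card_filter_not (fun p => (N p : ℝ) ≤ z), omegaUpTo]
  simp only [not_le]
  congr 2
  ext p
  simp [mem_primes, and_comm]

lemma abs_omegaM_sub_omegaUpTo_le (hs : StarCond N κ θ) {c x : ℝ} (hc : 0 < c) (hx : 1 < x)
    {a : P →₀ ℕ} (ha : a ∈ hs.elements x) :
    |(omegaM a : ℝ) - hs.omegaUpTo (x ^ c) a| ≤ c⁻¹ := by
  have hx₀ : 0 < x := zero_lt_one.trans hx
  have hpow := (hs.pow_card_filter_support_le_Nm (Real.rpow_nonneg hx₀.le c) a).trans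
    (hs.mem_elements.1 ha)
  rw [← Real.rpow_mul_natCast hx₀.le, ← Real.rpow_one x, ← Real.rpow_mul hx₀.le, one_mul,
    Real.rpow_le_rpow_left_iff hx, Real.rpow_one] at hpow
  rw [hs.omegaM_eq_omegaUpTo_add (x ^ c), Nat.cast_add, add_sub_cancel_left,
    abs_of_nonneg (Nat.cast_nonneg _), ← one_div, le_div_iff₀' hc]
  exact hpow

lemma mertensSum_nonneg (hs : StarCond N κ θ) (y : ℝ) : 0 ≤ hs.mertensSum y :=
  Finset.sum_nonneg fun _ _ => by positivity

-- The truncation `z = x ^ ((1 - θ) / 2)` makes the total error `z ^ 2 * x ^ θ` equal to `x`.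
lemma exists_sum_omegaUpTo_rpow_sub_sq_le (hs : StarCond N κ θ) :
    ∃ C, 0 ≤ C ∧ ∀ x : ℝ, 1 < x →
      ∑ a ∈ hs.elements x,
        (hs.omegaUpTo (x ^ ((1 - θ) / 2)) a - hs.mertensSum (x ^ ((1 - θ) / 2))) ^ 2 ≤
          κ * x * hs.mertensSum (x ^ ((1 - θ) / 2)) + C * x := by
  obtain ⟨C, hC, hvar⟩ := hs.exists_sum_omegaUpTo_sub_sq_le
  have hθ₀ := hs.2.1
  have hθ₁ := hs.2.2.1
  refine ⟨C, hC, fun x hx => ?_⟩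
  have hx₀ : 0 < x := zero_lt_one.trans hx
  have hz_sq : (x ^ ((1 - θ) / 2)) ^ 2 = x ^ (1 - θ) := by
    rw [← Real.rpow_mul_natCast hx₀.le, Nat.cast_ofNat, div_mul_cancel₀ _ two_ne_zero]
  have hz_le : (x ^ ((1 - θ) / 2)) ^ 2 ≤ x := by
    rw [hz_sq]
    exact Real.rpow_le_self_of_one_le hx.le (by linarith)
  refine (hvar x _ (Real.one_le_rpow hx.le (by linarith)) hz_le).trans_eq ?_
  rw [hz_sq, ← Real.rpow_add hx₀, sub_add_cancel, Real.rpow_one]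

lemma omegaM_sub_sq_le (hs : StarCond N κ θ) {c x : ℝ} (hc : 0 < c) (hx : 1 < x) {a : P →₀ ℕ}
    (ha : a ∈ hs.elements x) (S L : ℝ) : ((omegaM a : ℝ) - L) ^ 2 ≤
      3 * (hs.omegaUpTo (x ^ c) a - S) ^ 2 + 3 * (c⁻¹ ^ 2 + (S - L) ^ 2) := by
  have htail : ((omegaM a : ℝ) - hs.omegaUpTo (x ^ c) a) ^ 2 ≤ c⁻¹ ^ 2 :=
    sq_le_sq.2 ((hs.abs_omegaM_sub_omegaUpTo_le hc hx ha).trans (le_abs_self _))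
  have hsq := add_add_sq_le (omegaM a - hs.omegaUpTo (x ^ c) a) (hs.omegaUpTo (x ^ c) a - S) (S - L)
  rw [sub_add_sub_cancel, sub_add_sub_cancel] at hsq
  linarith

lemma exists_sum_omegaM_sub_sq_le (hs : StarCond N κ θ) :
    ∃ K, ∀ x L : ℝ, 1 < x → ∑ a ∈ hs.elements x, ((omegaM a : ℝ) - L) ^ 2 ≤
      K * x * (hs.mertensSum (x ^ ((1 - θ) / 2)) + 1 +
        (hs.mertensSum (x ^ ((1 - θ) / 2)) - L) ^ 2) := by
  obtain ⟨C, hC, hvar⟩ := hs.exists_sum_omegaUpTo_rpow_sub_sq_le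
  obtain ⟨D, hD, hcount⟩ := hs.exists_normCount_le
  set c := (1 - θ) / 2
  have hc : 0 < c := half_pos (sub_pos.2 hs.2.2.1)
  have hκ := hs.1
  refine ⟨3 * (κ + C + D * (c⁻¹ ^ 2 + 1)), fun x L hx => ?_⟩
  have hx₀ : 0 < x := zero_lt_one.trans hx
  set S := hs.mertensSum (x ^ c)
  have hS : 0 ≤ S := hs.mertensSum_nonneg _
  calc ∑ a ∈ hs.elements x, ((omegaM a : ℝ) - L) ^ 2
      ≤ 3 * ∑ a ∈ hs.elements x, (hs.omegaUpTo (x ^ c) a - S) ^ 2 +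
          (hs.elements x).card * (3 * (c⁻¹ ^ 2 + (S - L) ^ 2)) := by
        refine (Finset.sum_le_sum fun a ha => hs.omegaM_sub_sq_le hc hx ha S L).trans_eq ?_
        rw [Finset.sum_add_distrib, ← Finset.mul_sum, Finset.sum_const, nsmul_eq_mul]
    _ ≤ 3 * (κ * x * S + C * x) + D * x * (3 * (c⁻¹ ^ 2 + (S - L) ^ 2)) := by
        gcongr
        · exact hvar x hx
        · exact hs.card_elements x ▸ hcount x hx₀.le
    _ = 3 * x * (κ * S + C * 1 + D * (c⁻¹ ^ 2 * 1 + (S - L) ^ 2)) := by ring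
    _ ≤ 3 * x * (κ * (S + 1 + (S - L) ^ 2) + C * (S + 1 + (S - L) ^ 2) +
          D * (c⁻¹ ^ 2 * (S + 1 + (S - L) ^ 2) + (S + 1 + (S - L) ^ 2))) := by
        gcongr <;> nlinarith [sq_nonneg (S - L)]
    _ = 3 * (κ + C + D * (c⁻¹ ^ 2 + 1)) * x * (S + 1 + (S - L) ^ 2) := by ring

lemma isLittleO_sum_omegaM_sub_log_log_sq (hs : StarCond N κ θ) :
    (fun x => ∑ a ∈ hs.elements x, ((omegaM a : ℝ) - Real.log (Real.log x)) ^ 2) =o[atTop]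
      fun x => x * Real.log (Real.log x) ^ 2 := by
  obtain ⟨K, hK⟩ := hs.exists_sum_omegaM_sub_sq_le
  have hc : 0 < (1 - θ) / 2 := half_pos (sub_pos.2 hs.2.2.1)
  set S := fun x : ℝ => hs.mertensSum (x ^ ((1 - θ) / 2))
  have hequiv : S ~[atTop] fun x => Real.log (Real.log x) :=
    (hs.isEquivalent_mertensSum_log_log.comp_tendsto (tendsto_rpow_atTop hc)).trans
      (isEquivalent_log_log_rpow hc)
  have hlin : (fun x : ℝ => Real.log (Real.log x)) =o[atTop]
      fun x => Real.log (Real.log x) ^ 2 := by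
    simpa only [pow_one, Function.comp_def] using
      (isLittleO_pow_pow_atTop_of_lt (𝕜 := ℝ) one_lt_two).comp_tendsto tendsto_log_log_atTop
  have hone : (fun _ : ℝ => (1 : ℝ)) =o[atTop] fun x => Real.log (Real.log x) ^ 2 := by
    simpa only [pow_zero, Function.comp_def] using
      (isLittleO_pow_pow_atTop_of_lt (𝕜 := ℝ) two_pos).comp_tendsto tendsto_log_log_atTop
  have hsum : (fun x => S x + 1 + (S x - Real.log (Real.log x)) ^ 2) =o[atTop]
      fun x => Real.log (Real.log x) ^ 2 :=
    ((hequiv.isBigO.trans_isLittleO hlin).add hone).add (hequiv.isLittleO.pow two_pos)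
  refine (IsBigO.of_bound K ?_).trans_isLittleO
    ((isBigO_refl (fun x : ℝ => x) atTop).mul_isLittleO hsum)
  filter_upwards [eventually_gt_atTop 1] with x hx
  rw [Real.norm_of_nonneg (Finset.sum_nonneg fun _ _ => sq_nonneg _)]
  refine (hK x (Real.log (Real.log x)) hx).trans_eq ?_
  have : 0 ≤ S x := hs.mertensSum_nonneg _
  rw [Real.norm_of_nonneg (by positivity), mul_assoc]

lemma isLittleO_card_filter_omegaM_deviation (hs : StarCond N κ θ) {η : ℝ} (hη : 0 < η) :
    (fun x => (((hs.elements x).filter fun a =>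
      η * Real.log (Real.log x) < |omegaM a - Real.log (Real.log x)|).card : ℝ)) =o[atTop]
      fun x => x := by
  have hL := tendsto_log_log_atTop.eventually_gt_atTop 0
  have hchebyshev : (fun x => (((hs.elements x).filter fun a =>
      η * Real.log (Real.log x) < |omegaM a - Real.log (Real.log x)|).card : ℝ) *
        Real.log (Real.log x) ^ 2) =O[atTop]
      fun x => ∑ a ∈ hs.elements x, ((omegaM a : ℝ) - Real.log (Real.log x)) ^ 2 := by
    refine IsBigO.of_bound (η ^ 2)⁻¹ ?_
    filter_upwards [hL] with x hx
    rw [Real.norm_of_nonneg (by positivity),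
      Real.norm_of_nonneg (Finset.sum_nonneg fun _ _ => sq_nonneg _), inv_mul_eq_div,
      le_div_iff₀ (by positivity), mul_assoc, ← mul_pow, mul_comm _ η, ← nsmul_eq_mul]
    refine (Finset.card_nsmul_le_sum _ _ _ fun a ha => ?_).trans
      (Finset.sum_le_sum_of_subset_of_nonneg (Finset.filter_subset _ _) fun _ _ _ => sq_nonneg _)
    rw [← sq_abs ((omegaM a : ℝ) - _)]
    exact pow_le_pow_left₀ (by positivity) (Finset.mem_filter.1 ha).2.le 2
  refine ((hchebyshev.trans_isLittleO hs.isLittleO_sum_omegaM_sub_log_log_sq).mul_isBigO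
    (isBigO_refl (fun x : ℝ => (Real.log (Real.log x) ^ 2)⁻¹) atTop)).congr' ?_ ?_
  all_goals
    filter_upwards [hL] with x hx
    rw [mul_inv_cancel_right₀ (by positivity)]

end StarCond

/-! ### `h`-full elements -/

section HFull

variable {P : Type*} {N : P → ℕ} {h : ℕ}

/-- The elements `∑ᵢ (h + 1 + i) • bᵢ` with `i < h`; the `h`-full elements are exactly the sums of
one of these and an element `h • a`. -/
def fullRemainder (b : Fin h → P →₀ ℕ) : P →₀ ℕ := ∑ i : Fin h, (h + 1 + i) • b i

-- Writing `k = h q + r`, either `r = 0`, or `q ≥ 1` and `k = h (q - 1) + (h + r)`.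
lemma eq_mul_add_sum_ite (hh : h ≠ 0) {k : ℕ} (hk : k = 0 ∨ h ≤ k) :
    k = h * (if k % h = 0 then k / h else k / h - 1) +
      ∑ i : Fin h, (h + 1 + i) * if k % h = i + 1 then 1 else 0 := by
  rcases Nat.eq_zero_or_pos (k % h) with hr | hr
  · simp only [hr, (Nat.succ_ne_zero _).symm, if_true, if_false, mul_zero, Finset.sum_const_zero,
      add_zero]
    exact (Nat.mul_div_cancel' (Nat.dvd_of_mod_eq_zero hr)).symm
  · have hlt := Nat.mod_lt k (Nat.pos_of_ne_zero hh)
    have hhk : h ≤ k := hk.resolve_left (by rintro rfl; simp at hr)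
    obtain ⟨q, hq⟩ := Nat.exists_eq_succ_of_ne_zero (Nat.div_pos hhk (Nat.pos_of_ne_zero hh)).ne'
    have hdiv := Nat.div_add_mod k h
    rw [Finset.sum_eq_single (⟨k % h - 1, by lia⟩ : Fin h)
      (fun i _ hi => by
        rw [if_neg fun hki => hi (Fin.ext (by simp only; lia)), mul_zero]) (by simp),
      if_neg hr.ne', if_pos (by simp only; lia), hq]
    rw [hq] at hdiv
    simp only [Nat.succ_eq_add_one, mul_add] at hdiv ⊢
    lia

lemma HFull.exists_eq_nsmul_add_fullRemainder (hh : h ≠ 0) {m : P →₀ ℕ} (hm : HFull h m) :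
    ∃ (a : P →₀ ℕ) (b : Fin h → P →₀ ℕ), m = h • a + fullRemainder b := by
  refine ⟨m.mapRange (fun k => if k % h = 0 then k / h else k / h - 1) (by simp),
    fun i => m.mapRange (fun k => if k % h = i + 1 then 1 else 0) (by simp),
    Finsupp.ext fun p => ?_⟩
  simpa only [fullRemainder, Finsupp.add_apply, Finsupp.smul_apply, Finsupp.finsetSum_apply,
    Finsupp.mapRange_apply, smul_eq_mul] using eq_mul_add_sum_ite hh (hm p)

lemma hFull_nsmul (h : ℕ) (a : P →₀ ℕ) : HFull h (h • a) := fun p => by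
  rcases Nat.eq_zero_or_pos (a p) with hap | hap
  · exact Or.inl (by simp [hap])
  · exact Or.inr (Nat.le_mul_of_pos_right h hap)

lemma Nm_nsmul_add (N : P → ℕ) (h : ℕ) (a β : P →₀ ℕ) :
    Nm N (h • a + β) = Nm N a ^ h * Nm N β := by
  rw [Nm_eq_mulExt, mulExt_add, mulExt_nsmul]

lemma omegaM_le_omegaM_nsmul_add (hh : h ≠ 0) (a β : P →₀ ℕ) : omegaM a ≤ omegaM (h • a + β) :=
  Finset.card_le_card fun p hp => by
    simp only [Finsupp.mem_support_iff, Finsupp.add_apply, Finsupp.smul_apply, smul_eq_mul] at hp ⊢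
    have := Nat.mul_ne_zero hh hp
    lia

lemma omegaM_nsmul_add_le (h : ℕ) (a β : P →₀ ℕ) : omegaM (h • a + β) ≤ omegaM a + omegaM β :=
  (Finset.card_le_card (Finsupp.support_add.trans
    (Finset.union_subset_union_left Finsupp.support_smul))).trans (Finset.card_union_le _ _)

/-- `ω(m)` lies outside `[(1 - ε) log log N(m), (1 + ε) log log N(m)]`. -/
def IsExceptional (N : P → ℕ) (ε : ℝ) (m : P →₀ ℕ) : Prop :=
  (omegaM m : ℝ) < (1 - ε) * Real.log (Real.log (Nm N m)) ∨
    (1 + ε) * Real.log (Real.log (Nm N m)) < omegaM m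

lemma IsExceptional.lt_abs_sub {ε L c w B : ℝ} {m : P →₀ ℕ} (hm : IsExceptional N ε m)
    (hε : 0 < ε) (hL : |Real.log (Real.log (Nm N m)) - L| ≤ c) (hw : w ≤ omegaM m)
    (hwB : omegaM m ≤ w + B) (hlarge : (1 + ε) * c + B ≤ ε / 2 * L) :
    ε / 2 * L < |w - L| := by
  obtain ⟨hlower, hupper⟩ := abs_le.1 hL
  rcases hm with hlt | hgt
  · refine lt_abs.2 (Or.inr ?_)
    rcases le_total ε 1 with hε₁ | hε₁ <;> nlinarith
  · exact lt_abs.2 (Or.inl (by nlinarith))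

/-- The exceptional elements of norm at most `x` of the form `h • a + β`. -/
def exceptionalFiber (N : P → ℕ) (h : ℕ) (ε : ℝ) (β : P →₀ ℕ) (x : ℝ) : Set (P →₀ ℕ) :=
  {m | (Nm N m : ℝ) ≤ x ∧ IsExceptional N ε m ∧ ∃ a, m = h • a + β}

end HFull

namespace StarCond

variable {P : Type*} {N : P → ℕ} {κ θ : ℝ}

lemma summable_Nm_fullRemainder_rpow (hs : StarCond N κ θ) {h : ℕ} (hh : h ≠ 0) :
    Summable fun b : Fin h → P →₀ ℕ => (Nm N (fullRemainder b) : ℝ) ^ (-(1 / (h : ℝ))) := by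
  have hh₀ : (0 : ℝ) < h := by positivity
  have hexponent : ∀ i : Fin h, 1 < ((h + 1 + i : ℕ) : ℝ) * (1 / h) := fun i => by
    rw [mul_one_div, one_lt_div hh₀]
    exact_mod_cast (by lia : h < h + 1 + i)
  refine (summable_prod_apply (fun i m => by positivity)
    fun i => hs.summable_Nm_rpow_neg (hexponent i)).congr fun b => ?_
  have hprod : Nm N (fullRemainder b) = ∏ i : Fin h, Nm N (b i) ^ (h + 1 + i : ℕ) := by
    simp only [Nm_eq_mulExt, fullRemainder, mulExt_sum, mulExt_nsmul]
  rw [hprod, Nat.cast_prod, ← Real.finsetProd_rpow _ _ fun i _ => by positivity]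
  refine Finset.prod_congr rfl fun i _ => ?_
  rw [Nat.cast_pow, ← Real.rpow_natCast_mul (Nat.cast_nonneg _), mul_neg]

lemma finite_exceptionalFiber (hs : StarCond N κ θ) (h : ℕ) (ε : ℝ) (β : P →₀ ℕ) (x : ℝ) :
    (exceptionalFiber N h ε β x).Finite :=
  (hs.finite_Nm_le x).subset fun _ hm => hm.1

lemma ncard_exceptionalFiber_le_normCount (hs : StarCond N κ θ) {h : ℕ} (hh : h ≠ 0) (ε : ℝ)
    (β : P →₀ ℕ) {x : ℝ} (hx : 0 ≤ x) :
    (exceptionalFiber N h ε β x).ncard ≤ normCount N ((x / Nm N β) ^ (1 / (h : ℝ))) := by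
  have hβ : (0 : ℝ) < Nm N β := by exact_mod_cast hs.Nm_pos β
  refine (Set.ncard_le_ncard (t := (h • · + β) '' {a | (Nm N a : ℝ) ≤ _}) ?_
    ((hs.finite_Nm_le _).image _)).trans (Set.ncard_image_le (hs.finite_Nm_le _))
  rintro m ⟨hmx, -, a, rfl⟩
  refine ⟨a, ?_, rfl⟩
  rw [Nm_nsmul_add, Nat.cast_mul, Nat.cast_pow, ← le_div_iff₀ hβ] at hmx
  exact (natCast_le_rpow_one_div_iff hh (by positivity)).2 hmx

lemma exists_ncard_exceptionalFiber_le (hs : StarCond N κ θ) {h : ℕ} (hh : h ≠ 0) (ε : ℝ) :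
    ∃ D, ∀ (β : P →₀ ℕ) (x : ℝ), 0 ≤ x → ((exceptionalFiber N h ε β x).ncard : ℝ) ≤
      D * (Nm N β : ℝ) ^ (-(1 / (h : ℝ))) * x ^ (1 / (h : ℝ)) := by
  obtain ⟨D, -, hcount⟩ := hs.exists_normCount_le
  refine ⟨D, fun β x hx => ?_⟩
  calc ((exceptionalFiber N h ε β x).ncard : ℝ)
      ≤ normCount N ((x / Nm N β) ^ (1 / (h : ℝ))) := by
        exact_mod_cast hs.ncard_exceptionalFiber_le_normCount hh ε β hx
    _ ≤ D * (x / Nm N β) ^ (1 / (h : ℝ)) := hcount _ (by positivity)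
    _ = D * (Nm N β : ℝ) ^ (-(1 / (h : ℝ))) * x ^ (1 / (h : ℝ)) := by
        rw [Real.div_rpow hx (Nat.cast_nonneg _), Real.rpow_neg (Nat.cast_nonneg _)]
        ring

lemma eventually_exceptionalFiber_subset (hs : StarCond N κ θ) {h : ℕ} (hh : h ≠ 0) {ε : ℝ}
    (hε : 0 < ε) (β : P →₀ ℕ) :
    ∀ᶠ y in atTop, exceptionalFiber N h ε β (y ^ h) ⊆
      (h • · + β) '' (hs.elements (y ^ (1 / 2 : ℝ)) ∪ (hs.elements y).filter fun a =>
        ε / 2 * Real.log (Real.log y) < |omegaM a - Real.log (Real.log y)| : Finset (P →₀ ℕ)) := by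
  have hlarge : ∀ᶠ y : ℝ in atTop, (1 + ε) * (Real.log 2 + Real.log h) + omegaM β ≤
      ε / 2 * Real.log (Real.log y) :=
    (tendsto_log_log_atTop.const_mul_atTop (half_pos hε)).eventually_ge_atTop _
  filter_upwards [hlarge, eventually_gt_atTop 1] with y hy_large hy
  rintro m ⟨hmx, hm, a, rfl⟩
  refine ⟨a, ?_, rfl⟩
  rw [Finset.mem_coe, Finset.mem_union, Finset.mem_filter, mem_elements, mem_elements]
  have hNm_le : Nm N a ^ h ≤ Nm N (h • a + β) :=
    (Nat.le_mul_of_pos_right _ (hs.Nm_pos β)).trans_eq (Nm_nsmul_add N h a β).symm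
  have hay : (Nm N a : ℝ) ≤ y := by
    refine le_of_pow_le_pow_left₀ hh (by positivity) (le_trans ?_ hmx)
    exact_mod_cast hNm_le
  refine or_iff_not_imp_left.2 fun hroot => ⟨hay, ?_⟩
  have hlower : y ^ (1 / 2 : ℝ) ≤ Nm N (h • a + β) :=
    (not_le.1 hroot).le.trans (by exact_mod_cast (Nat.le_self_pow hh _).trans hNm_le)
  exact hm.lt_abs_sub hε (abs_log_log_sub_le hy hlower hmx)
    (by exact_mod_cast omegaM_le_omegaM_nsmul_add hh a β)
    (by exact_mod_cast omegaM_nsmul_add_le h a β) hy_large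

lemma isLittleO_ncard_exceptionalFiber (hs : StarCond N κ θ) {h : ℕ} (hh : h ≠ 0) {ε : ℝ}
    (hε : 0 < ε) (β : P →₀ ℕ) :
    (fun x => ((exceptionalFiber N h ε β x).ncard : ℝ)) =o[atTop]
      fun x => x ^ (1 / (h : ℝ)) := by
  have hsmall : (fun y => ((hs.elements (y ^ (1 / 2 : ℝ))).card : ℝ)) =o[atTop] fun y => y := by
    obtain ⟨D, -, hcount⟩ := hs.exists_normCount_le
    refine (IsBigO.of_bound D ?_).trans_isLittleO
      (isLittleO_rpow_id (by norm_num : (1 / 2 : ℝ) < 1))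
    filter_upwards [eventually_ge_atTop 0] with y hy
    rw [hs.card_elements, Real.norm_natCast, Real.norm_of_nonneg (by positivity)]
    exact hcount _ (by positivity)
  have hfiber : (fun y => ((exceptionalFiber N h ε β (y ^ h)).ncard : ℝ)) =o[atTop] fun y => y := by
    refine (IsBigO.of_bound 1 ?_).trans_isLittleO
      (hsmall.add (hs.isLittleO_card_filter_omegaM_deviation (half_pos hε)))
    filter_upwards [hs.eventually_exceptionalFiber_subset hh hε β] with y hy
    rw [Real.norm_natCast, one_mul, Real.norm_of_nonneg (by positivity)]
    have := (Set.ncard_le_ncard hy ((Finset.finite_toSet _).image _)).trans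
      (Set.ncard_image_le (Finset.finite_toSet _))
    rw [Set.ncard_coe_finset] at this
    exact_mod_cast this.trans (Finset.card_union_le _ _)
  refine (hfiber.comp_tendsto (tendsto_rpow_atTop (by positivity : 0 < 1 / (h : ℝ)))).congr' ?_
    EventuallyEq.rfl
  filter_upwards [eventually_ge_atTop 0] with x hx
  rw [Function.comp_apply, one_div, Real.rpow_inv_natCast_pow hx hh]

lemma isLittleO_ncard_hFull_isExceptional (hs : StarCond N κ θ) {h : ℕ} (hh : h ≠ 0) {ε : ℝ}
    (hε : 0 < ε) :
    (fun x => ({m | HFull h m ∧ (Nm N m : ℝ) ≤ x ∧ IsExceptional N ε m}.ncard : ℝ)) =o[atTop]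
      fun x : ℝ => x ^ (1 / (h : ℝ)) := by
  obtain ⟨D, hD⟩ := hs.exists_ncard_exceptionalFiber_le hh ε
  have hsum := (hs.summable_Nm_fullRemainder_rpow hh).mul_left D
  have hbound : ∀ᶠ x : ℝ in atTop, ∀ b : Fin h → P →₀ ℕ,
      ‖((exceptionalFiber N h ε (fullRemainder b) x).ncard : ℝ) / x ^ (1 / (h : ℝ))‖ ≤
        D * (Nm N (fullRemainder b) : ℝ) ^ (-(1 / (h : ℝ))) := by
    filter_upwards [eventually_gt_atTop 0] with x hx b
    rw [Real.norm_of_nonneg (by positivity), div_le_iff₀ (by positivity)]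
    exact hD _ x hx.le
  have hlim := tendsto_tsum_of_dominated_convergence hsum
    (fun b => (hs.isLittleO_ncard_exceptionalFiber hh hε (fullRemainder b)).tendsto_div_nhds_zero)
    hbound
  rw [tsum_zero] at hlim
  refine isLittleO_of_tendsto' ?_ (squeeze_zero' ?_ ?_ hlim)
  · filter_upwards [eventually_gt_atTop 0] with x hx hzero
    exact absurd hzero (by positivity)
  · filter_upwards [eventually_gt_atTop 0] with x hx
    positivity
  · filter_upwards [eventually_gt_atTop 0] with x hx
    rw [tsum_div_const]
    gcongr
    refine ncard_le_tsum_ncard ((hs.finite_Nm_le x).subset fun m hm => hm.2.1)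
      (fun b => hs.finite_exceptionalFiber h ε (fullRemainder b) x) ?_ ?_
    · rintro m ⟨hfull, hmx, hm⟩
      obtain ⟨a, b, rfl⟩ := hfull.exists_eq_nsmul_add_fullRemainder hh
      exact Set.mem_iUnion.2 ⟨b, hmx, hm, a, rfl⟩
    · exact (hsum.mul_right (x ^ (1 / (h : ℝ)))).of_nonneg_of_le (fun b => by positivity)
        fun b => hD _ x hx.le

lemma isBigO_rpow_ncard_hFull (hs : StarCond N κ θ) {h : ℕ} (hh : h ≠ 0) :
    (fun x : ℝ => x ^ (1 / (h : ℝ))) =O[atTop]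
      fun x => ({m : P →₀ ℕ | HFull h m ∧ (Nm N m : ℝ) ≤ x}.ncard : ℝ) := by
  have hcount : (fun y : ℝ => y) =O[atTop] fun y => (normCount N y : ℝ) := by
    refine IsBigO.of_bound (κ / 2)⁻¹ ?_
    filter_upwards [hs.tendsto_normCount_div.eventually_const_lt (half_lt_self hs.1),
      eventually_gt_atTop 0] with y hy hy₀
    rw [lt_div_iff₀ hy₀] at hy
    rw [Real.norm_of_nonneg hy₀.le, Real.norm_natCast, ← div_eq_inv_mul,
      le_div_iff₀' (half_pos hs.1)]
    exact hy.le
  refine (hcount.comp_tendsto (tendsto_rpow_atTop (by positivity : 0 < 1 / (h : ℝ)))).trans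
    (IsBigO.of_bound 1 ?_)
  filter_upwards [eventually_ge_atTop 0] with x hx
  rw [Function.comp_apply, Real.norm_natCast, Real.norm_natCast, one_mul, Nat.cast_le]
  refine Set.ncard_le_ncard_of_injOn (h • ·) (fun a ha => ⟨hFull_nsmul h a, ?_⟩)
    (nsmul_right_injective hh).injOn ((hs.finite_Nm_le x).subset fun m hm => hm.2)
  rw [Nm_eq_mulExt, mulExt_nsmul, Nat.cast_pow]
  exact (natCast_le_rpow_one_div_iff hh hx).1 ha

end StarCond

theorem normal_order_omega_hfull_general {P : Type*} {N : P → ℕ} {κ θ : ℝ}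
    (hstar : StarCond N κ θ) {h : ℕ} (hh : h ≠ 0) {ε : ℝ} (hε : 0 < ε) :
    Tendsto (fun x : ℝ =>
        (({m : P →₀ ℕ | HFull h m ∧ (Nm N m : ℝ) ≤ x ∧
            ((omegaM m : ℝ) < (1 - ε) * Real.log (Real.log (Nm N m)) ∨
              (1 + ε) * Real.log (Real.log (Nm N m)) < (omegaM m : ℝ))}.ncard : ℝ)
          / ({m : P →₀ ℕ | HFull h m ∧ (Nm N m : ℝ) ≤ x}.ncard : ℝ)))
      atTop (𝓝 0) :=
  ((hstar.isLittleO_ncard_hFull_isExceptional hh hε).trans_isBigO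
    (hstar.isBigO_rpow_ncard_hFull hh)).tendsto_div_nhds_zero

/-- `ω` has normal order `log log N(m)` over the `h`-full elements. -/
theorem normal_order_omega_hfull {P : Type*} [Countable P] (N : P → ℕ)
    (hN : ∀ p, 2 ≤ N p) (κ θ : ℝ) (hstar : StarCond N κ θ)
    (h : ℕ) (hh : 2 ≤ h) (ε : ℝ) (hε : 0 < ε) :
    Tendsto (fun x : ℝ =>
        (({m : P →₀ ℕ | HFull h m ∧ (Nm N m : ℝ) ≤ x ∧
            ((omegaM m : ℝ) < (1 - ε) * Real.log (Real.log (Nm N m)) ∨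
              (1 + ε) * Real.log (Real.log (Nm N m)) < (omegaM m : ℝ))}.ncard : ℝ)
          / ({m : P →₀ ℕ | HFull h m ∧ (Nm N m : ℝ) ≤ x}.ncard : ℝ)))
      atTop (𝓝 0) :=
  normal_order_omega_hfull_general hstar (by lia) hε
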